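/- arXiv:1404.0110 — 3 statements merged into one kernel-verified Lean document; each statement's English description precedes it below -/
import Mathlib

section
/- The minimum cardinality of a short covering of 𝔽_7³ is 5, the minimum cardinality of a short covering of 𝔽_8³ is 6, and the minimum cardinality of a short covering of 𝔽_9³ is 6. -/
open Set Pointwise

variable {F : Type*} [Field F]

/-- Hamming distance on `𝔽_q³`. -/
noncomputable def hdist (u v : Fin 3 → F) : ℕ := Set.ncard {i : Fin 3 | u i ≠ v i}

/-- The ball of radius 1 centered at `u`. -/
def ball (u : Fin 3 → F) : Set (Fin 3 → F) := {v | hdist u v ≤ 1}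

/-- The extended ball of `u`: the union of the balls centered at scalar multiples of `u`. -/
def extBall (u : Fin 3 → F) : Set (Fin 3 → F) := ⋃ l : F, ball (l • u)

/-- `D_q`: vectors with pairwise distinct, nonzero coordinates. -/
def Dq : Set (Fin 3 → F) :=
  {u | u 0 ≠ u 1 ∧ u 0 ≠ u 2 ∧ u 1 ≠ u 2 ∧ u 0 ≠ 0 ∧ u 1 ≠ 0 ∧ u 2 ≠ 0}

/-- `B̃(u) = B(u) ∩ D_q`. -/
def ballD (u : Fin 3 → F) : Set (Fin 3 → F) := ball u ∩ Dq

/-- `Ẽ(u) = E(u) ∩ D_q`. -/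
def extBallD (u : Fin 3 → F) : Set (Fin 3 → F) := extBall u ∩ Dq

/-- `H` is a short covering if the extended balls centered at its elements cover the space. -/
def ShortCovering (H : Set (Fin 3 → F)) : Prop := (⋃ h ∈ H, extBall h) = Set.univ

instance : Fact (Nat.Prime 7) := ⟨by norm_num⟩

theorem mem_extBall_iff {F : Type*} [Field F] (h v : Fin 3 → F) :
    v ∈ extBall h ↔ ∃ l : F, ∃ i j : Fin 3, i ≠ j ∧ l * h i = v i ∧ l * h j = v j := by
  classical
  simp only [extBall, ball, hdist, Set.mem_iUnion, Set.mem_ofPred_eq, Pi.smul_apply, smul_eq_mul]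
  refine exists_congr fun l => ?_
  rw [Set.ncard_le_one (Set.toFinite _)]
  simp only [Set.mem_ofPred_eq]
  constructor
  · intro H
    by_cases h0 : l * h 0 = v 0 <;> by_cases h1 : l * h 1 = v 1 <;> by_cases h2 : l * h 2 = v 2
    · exact ⟨0, 1, by decide, h0, h1⟩
    · exact ⟨0, 1, by decide, h0, h1⟩
    · exact ⟨0, 2, by decide, h0, h2⟩
    · exact absurd (H 1 h1 2 h2) (by decide)
    · exact ⟨1, 2, by decide, h1, h2⟩
    · exact absurd (H 0 h0 2 h2) (by decide)
    · exact absurd (H 0 h0 1 h1) (by decide)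
    · exact absurd (H 0 h0 1 h1) (by decide)
  · rintro ⟨i, j, hij, hi, hj⟩ a ha b hb
    have h1 : a ≠ i := by rintro rfl; exact ha hi
    have h2 : a ≠ j := by rintro rfl; exact ha hj
    have h3 : b ≠ i := by rintro rfl; exact hb hi
    have h4 : b ≠ j := by rintro rfl; exact hb hj
    omega

theorem shortCovering_iff {F : Type*} [Field F] (H : Set (Fin 3 → F)) :
    ShortCovering H ↔ ∀ v : Fin 3 → F, ∃ h ∈ H, ∃ l : F, ∃ i j : Fin 3,
      i ≠ j ∧ l * h i = v i ∧ l * h j = v j := by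
  simp only [ShortCovering, Set.eq_univ_iff_forall, Set.mem_iUnion, mem_extBall_iff, exists_prop]

/-- A covering contains, for each coordinate, a nonzero vector vanishing there. -/
theorem exists_zero_coord {F : Type*} [Field F] [Fintype F] (S : Finset (Fin 3 → F))
    (hS : ShortCovering (S : Set (Fin 3 → F))) (hc : S.card + 1 < Fintype.card F)
    (i j k : Fin 3) (hij : i ≠ j) (hik : i ≠ k) (hjk : j ≠ k) :
    ∃ g ∈ S, g i = 0 ∧ (g j ≠ 0 ∨ g k ≠ 0) := by
  classical
  rw [shortCovering_iff] at hS
  obtain ⟨x, hx⟩ : ∃ x, x ∉ insert (0 : F) (S.image fun h => h j / h k) := by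
    by_contra! hcon
    have h1 : Fintype.card F ≤ (insert (0 : F) (S.image fun h => h j / h k)).card := by
      rw [← Finset.card_univ]
      exact Finset.card_le_card fun x _ => hcon x
    have h2 := Finset.card_insert_le (0 : F) (S.image fun h => h j / h k)
    have h3 : (S.image fun h => h j / h k).card ≤ S.card := Finset.card_image_le
    omega
  simp only [Finset.mem_insert, Finset.mem_image, not_or, not_exists, not_and] at hx
  obtain ⟨hx0, hx⟩ := hx
  obtain ⟨h, hh, l, a, b, hab, ha, hb⟩ := hS (fun t => if t = i then 0 else if t = j then x else 1)
  have key : ∀ t, t = i ∨ t = j ∨ t = k := by intro t; omega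
  have vj : (if j = i then (0 : F) else if j = j then x else 1) = x := by simp [hij.symm]
  have vk : (if k = i then (0 : F) else if k = j then x else 1) = 1 := by simp [hik.symm, hjk.symm]
  have A : (l * h i = 0 ∧ l * h j = x) ∨ (l * h i = 0 ∧ l * h k = 1) ∨
      (l * h j = x ∧ l * h k = 1) := by
    rcases key a with rfl | rfl | rfl <;> rcases key b with rfl | rfl | rfl <;> simp_all
  refine ⟨h, hh, ?_⟩
  rcases A with ⟨A, B⟩ | ⟨A, B⟩ | ⟨A, B⟩
  · have hl : l ≠ 0 := by rintro rfl; simp at B; exact hx0 B.symm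
    refine ⟨by simpa [hl] using A, Or.inl ?_⟩
    intro h0; rw [h0, mul_zero] at B; exact hx0 B.symm
  · have hl : l ≠ 0 := by rintro rfl; simp at B
    refine ⟨by simpa [hl] using A, Or.inr ?_⟩
    intro h0; rw [h0, mul_zero] at B; exact zero_ne_one B
  · exfalso
    have hl : l ≠ 0 := by rintro rfl; simp at B
    have hk : h k ≠ 0 := by rintro h0; simp [h0] at B
    apply hx h hh
    rw [div_eq_iff hk, ← A]
    linear_combination (-(h j)) * B

/-- If few vectors have two given nonzero coordinates, something is left uncovered. -/
theorem not_covering {F : Type*} [Field F] [Fintype F] [DecidableEq F] (S : Finset (Fin 3 → F))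
    (hS : ShortCovering (S : Set (Fin 3 → F))) (hc : S.card + 1 < Fintype.card F)
    (i j k : Fin 3) (hij : i ≠ j) (hik : i ≠ k) (hjk : j ≠ k)
    (hc2 : (S.filter fun h => h i ≠ 0 ∧ h k ≠ 0).card +
      (S.filter fun h => h j ≠ 0 ∧ h k ≠ 0).card + 1 < Fintype.card F) : False := by
  rw [shortCovering_iff] at hS
  obtain ⟨x, hx⟩ : ∃ x, x ∉ insert (0 : F) (S.image fun h => h i / h j) := by
    by_contra! hcon
    have h1 : Fintype.card F ≤ (insert (0 : F) (S.image fun h => h i / h j)).card := by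
      rw [← Finset.card_univ]
      exact Finset.card_le_card fun x _ => hcon x
    have h2 := Finset.card_insert_le (0 : F) (S.image fun h => h i / h j)
    have h3 : (S.image fun h => h i / h j).card ≤ S.card := Finset.card_image_le
    omega
  obtain ⟨y, hy⟩ : ∃ y, y ∉ insert (0 : F)
      (((S.filter fun h => h i ≠ 0 ∧ h k ≠ 0).image fun h => x * h k / h i) ∪
        ((S.filter fun h => h j ≠ 0 ∧ h k ≠ 0).image fun h => h k / h j)) := by
    by_contra! hcon
    have h1 := Finset.card_le_card (fun x _ => hcon x : Finset.univ ⊆ _)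
    rw [Finset.card_univ] at h1
    have h2 := h1.trans (Finset.card_insert_le _ _)
    have h3 := h2.trans (Nat.add_le_add_right (Finset.card_union_le _ _) 1)
    have h4 : ((S.filter fun h => h i ≠ 0 ∧ h k ≠ 0).image fun h => x * h k / h i).card ≤ _ :=
      Finset.card_image_le
    have h5 : ((S.filter fun h => h j ≠ 0 ∧ h k ≠ 0).image fun h => h k / h j).card ≤ _ :=
      Finset.card_image_le
    omega
  simp only [Finset.mem_insert, Finset.mem_image, Finset.mem_union, Finset.mem_filter,
    not_or, not_exists, not_and] at hx hy
  obtain ⟨hx0, hx⟩ := hx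
  obtain ⟨hy0, hy1, hy2⟩ := hy
  obtain ⟨h, hh, l, a, b, hab, ha, hb⟩ := hS (fun t => if t = i then x else if t = j then 1 else y)
  have key : ∀ t, t = i ∨ t = j ∨ t = k := by intro t; omega
  have vj : (if j = i then x else if j = j then 1 else y) = 1 := by simp [hij.symm]
  have vk : (if k = i then x else if k = j then 1 else y) = y := by simp [hik.symm, hjk.symm]
  have A : (l * h i = x ∧ l * h j = 1) ∨ (l * h i = x ∧ l * h k = y) ∨
      (l * h j = 1 ∧ l * h k = y) := by
    rcases key a with rfl | rfl | rfl <;> rcases key b with rfl | rfl | rfl <;> simp_all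
  rcases A with ⟨A, B⟩ | ⟨A, B⟩ | ⟨A, B⟩
  · have hk : h j ≠ 0 := by rintro h0; simp [h0] at B
    apply hx h hh
    rw [div_eq_iff hk, ← A]
    linear_combination (-(h i)) * B
  · have hi : h i ≠ 0 := by rintro h0; rw [h0, mul_zero] at A; exact hx0 A.symm
    have hk : h k ≠ 0 := by rintro h0; rw [h0, mul_zero] at B; exact hy0 B.symm
    apply hy1 h ⟨hh, hi, hk⟩
    rw [div_eq_iff hi, ← A, ← B]
    ring
  · have hi : h j ≠ 0 := by rintro h0; simp [h0] at A
    have hk : h k ≠ 0 := by rintro h0; rw [h0, mul_zero] at B; exact hy0 B.symm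
    apply hy2 h ⟨hh, hi, hk⟩
    rw [div_eq_iff hi, ← B]
    linear_combination (-(h k)) * A

theorem lower_bound {F : Type*} [Field F] [Finite F] (m : ℕ) (hm : m + 2 < Nat.card F)
    (hm2 : 2 * m < Nat.card F + 3) (H : Set (Fin 3 → F)) (hH : ShortCovering H) :
    m < H.ncard := by
  classical
  have := Fintype.ofFinite F
  rw [Nat.card_eq_fintype_card] at hm hm2
  by_contra! hcon
  obtain ⟨S, rfl⟩ : ∃ S : Finset (Fin 3 → F), (S : Set (Fin 3 → F)) = H :=
    ⟨(Set.toFinite H).toFinset, by simp⟩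
  rw [Set.ncard_coe_finset] at hcon
  have hc : S.card + 1 < Fintype.card F := by omega
  obtain ⟨g0, s0, z0, n0⟩ := exists_zero_coord S hH hc 0 1 2 (by decide) (by decide) (by decide)
  obtain ⟨g1, s1, z1, n1⟩ := exists_zero_coord S hH hc 1 0 2 (by decide) (by decide) (by decide)
  obtain ⟨g2, s2, z2, n2⟩ := exists_zero_coord S hH hc 2 0 1 (by decide) (by decide) (by decide)
  have c0 := not_covering S hH hc 1 2 0 (by decide) (by decide) (by decide)
  have c1 := not_covering S hH hc 0 2 1 (by decide) (by decide) (by decide)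
  have c2 := not_covering S hH hc 0 1 2 (by decide) (by decide) (by decide)
  have e10 : (S.filter fun h => h 1 ≠ 0 ∧ h 0 ≠ 0) = S.filter fun h => h 0 ≠ 0 ∧ h 1 ≠ 0 := by
    simp only [and_comm]
  have e20 : (S.filter fun h => h 2 ≠ 0 ∧ h 0 ≠ 0) = S.filter fun h => h 0 ≠ 0 ∧ h 2 ≠ 0 := by
    simp only [and_comm]
  have e21 : (S.filter fun h => h 2 ≠ 0 ∧ h 1 ≠ 0) = S.filter fun h => h 1 ≠ 0 ∧ h 2 ≠ 0 := by
    simp only [and_comm]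
  rw [e10, e20] at c0
  rw [e21] at c1
  set P01 := (S.filter fun h => h 0 ≠ 0 ∧ h 1 ≠ 0) with hP01
  set P02 := (S.filter fun h => h 0 ≠ 0 ∧ h 2 ≠ 0) with hP02
  set P12 := (S.filter fun h => h 1 ≠ 0 ∧ h 2 ≠ 0) with hP12
  let d : (Fin 3 → F) → ℕ := fun h => (if h 0 ≠ 0 ∧ h 1 ≠ 0 then 0 else 1) +
    (if h 0 ≠ 0 ∧ h 2 ≠ 0 then 0 else 1) + (if h 1 ≠ 0 ∧ h 2 ≠ 0 then 0 else 1)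
  have hsum : P01.card + P02.card + P12.card + ∑ h ∈ S, d h = 3 * S.card := by
    rw [hP01, hP02, hP12, Finset.card_filter, Finset.card_filter, Finset.card_filter,
      ← Finset.sum_add_distrib, ← Finset.sum_add_distrib, ← Finset.sum_add_distrib, mul_comm,
      ← smul_eq_mul, ← Finset.sum_const]
    refine Finset.sum_congr rfl fun h _ => ?_
    simp only [d]
    split_ifs <;> rfl
  have hd : 5 ≤ ∑ h ∈ S, d h := by
    have d0 : 2 ≤ d g0 := by simp [d, z0]
    have d1 : 2 ≤ d g1 := by simp only [d, z1]; simp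
    have d2 : 2 ≤ d g2 := by simp [d, z2]
    have two : ∀ a ∈ S, ∀ b ∈ S, a ≠ b → d a + d b ≤ ∑ h ∈ S, d h := by
      intro a ha b hb hab
      rw [← Finset.sum_pair hab]
      exact Finset.sum_le_sum_of_subset (by intro x; simp; rintro (rfl | rfl) <;> assumption)
    by_cases h01 : g0 = g1
    · subst h01
      have : g0 ≠ g2 := by rintro rfl; simp_all
      have d3 : 3 ≤ d g0 := by simp [d, z0, z1]
      have := two _ s0 _ s2 this
      omega
    by_cases h02 : g0 = g2
    · subst h02
      have d3 : 3 ≤ d g0 := by simp [d, z0, z2]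
      have := two _ s0 _ s1 h01
      omega
    by_cases h12 : g1 = g2
    · subst h12
      have d3 : 3 ≤ d g1 := by simp [d, z1, z2]
      have := two _ s0 _ s1 h01
      omega
    have h3 : ∑ h ∈ ({g0, g1, g2} : Finset (Fin 3 → F)), d h = d g0 + (d g1 + d g2) := by
      rw [Finset.sum_insert (by simp [h01, h02]), Finset.sum_pair h12]
    have h4 : ∑ h ∈ ({g0, g1, g2} : Finset (Fin 3 → F)), d h ≤ ∑ h ∈ S, d h :=
      Finset.sum_le_sum_of_subset (by intro x; simp; rintro (rfl | rfl | rfl) <;> assumption)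
    omega
  by_contra
  have c0' := mt c0 id
  have c1' := mt c1 id
  have c2' := mt c2 id
  omega

/-- Reduction of the covering property to exponents of a generator. -/
theorem covering_of_exponents {F : Type*} [Field F] (n : ℕ) (hpos : 0 < n)
    (g : Fˣ) (hg : ∀ x : Fˣ, x ∈ Subgroup.zpowers g) (hgn : orderOf g = n)
    (H : Set (Fin 3 → F)) (R C D : List ℕ)
    (hz : ∀ i : Fin 3, ∃ h ∈ H, ∃ j, i ≠ j ∧ h i = 0 ∧ h j ≠ 0)
    (hR : ∀ a ∈ R, ∃ h ∈ H, h 2 = 1 ∧ h 0 = (g : F) ^ a)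
    (hC : ∀ b ∈ C, ∃ h ∈ H, h 2 = 1 ∧ h 1 = (g : F) ^ b)
    (hD : ∀ c ∈ D, ∃ h ∈ H, h 1 ≠ 0 ∧ h 0 = (g : F) ^ c * h 1)
    (hcov : ∀ a < n, ∀ b < n, (∃ r ∈ R, r % n = a) ∨ (∃ r ∈ C, r % n = b) ∨
      ∃ c ∈ D, (c + b) % n = a) : ShortCovering H := by
  rw [shortCovering_iff]
  intro v
  by_cases hv : ∃ i, v i = 0
  · obtain ⟨i, hi⟩ := hv
    obtain ⟨h, hh, j, hij, h0, hj⟩ := hz i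
    exact ⟨h, hh, v j / h j, i, j, hij, by rw [h0, hi, mul_zero], div_mul_cancel₀ _ hj⟩
  push Not at hv
  have gmod : ∀ r, (g : F) ^ (r % n) = (g : F) ^ r := by
    intro r
    rw [← hgn]
    exact_mod_cast congrArg Units.val (pow_mod_orderOf g r)
  have hex : ∀ x : F, x ≠ 0 → ∃ a < n, (g : F) ^ a = x := by
    intro x hx
    have hfin : IsOfFinOrder g := orderOf_pos_iff.mp (by omega)
    have h1 := hg (Units.mk0 x hx)
    rw [← hfin.mem_powers_iff_mem_zpowers] at h1
    obtain ⟨k, hk⟩ := h1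
    refine ⟨k % n, Nat.mod_lt _ hpos, ?_⟩
    rw [gmod]
    have hk' : g ^ k = Units.mk0 x hx := hk
    rw [← Units.val_pow_eq_pow_val, hk', Units.val_mk0]
  obtain ⟨a, ha, ea⟩ := hex (v 0 / v 2) (div_ne_zero (hv 0) (hv 2))
  obtain ⟨b, hb, eb⟩ := hex (v 1 / v 2) (div_ne_zero (hv 1) (hv 2))
  rw [eq_div_iff (hv 2)] at ea eb
  rcases hcov a ha b hb with ⟨r, hr, rfl⟩ | ⟨r, hr, rfl⟩ | ⟨c, hc, rfl⟩
  · obtain ⟨h, hh, h2, h0⟩ := hR r hr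
    refine ⟨h, hh, v 2, 0, 2, by decide, ?_, by rw [h2, mul_one]⟩
    rw [h0, ← ea, gmod, mul_comm]
  · obtain ⟨h, hh, h2, h0⟩ := hC r hr
    refine ⟨h, hh, v 2, 1, 2, by decide, ?_, by rw [h2, mul_one]⟩
    rw [h0, ← eb, gmod, mul_comm]
  · obtain ⟨h, hh, h1, h0⟩ := hD c hc
    refine ⟨h, hh, v 1 / h 1, 0, 1, by decide, ?_, div_mul_cancel₀ _ h1⟩
    rw [h0, ← ea, gmod, pow_add, mul_assoc, eb]
    field_simp

theorem exists_generator {F : Type*} [Field F] [Finite F] (n : ℕ) (hn : Nat.card F = n + 1) :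
    ∃ g : Fˣ, (∀ x : Fˣ, x ∈ Subgroup.zpowers g) ∧ orderOf g = n := by
  obtain ⟨g, hg⟩ := IsCyclic.exists_generator (α := Fˣ)
  refine ⟨g, hg, ?_⟩
  rw [orderOf_eq_card_of_forall_mem_zpowers hg, Nat.card_units, hn]
  rfl

theorem upper_seven {F : Type*} [Field F] [Finite F] (hn : Nat.card F = 7) :
    ∃ H : Set (Fin 3 → F), ShortCovering H ∧ H.ncard ≤ 5 := by
  classical
  obtain ⟨g, hg, ho⟩ := exists_generator 6 hn
  refine ⟨(({![(g : F), 1, 1], ![(g : F) ^ 5, (g : F) ^ 2, 1], ![(g : F) ^ 3, 0, 1], ![0, (g : F) ^ 4, 1], ![(g : F) ^ 5, 1, 0]} :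
    Finset (Fin 3 → F)) : Set (Fin 3 → F)), ?_, ?_⟩
  · refine covering_of_exponents 6 (by norm_num) g hg ho _ [1, 5, 3] [0, 2, 4] [1, 3, 5]
      ?_ ?_ ?_ ?_ (by decide)
    · intro i
      fin_cases i
      · exact ⟨![0, (g : F) ^ 4, 1], by simp, 2, by decide, by simp, by simp⟩
      · exact ⟨![(g : F) ^ 3, 0, 1], by simp, 2, by decide, by simp, by simp⟩
      · exact ⟨![(g : F) ^ 5, 1, 0], by simp, 1, by decide, by simp, by simp⟩
    all_goals simp [← pow_add]
  · rw [Set.ncard_coe_finset]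
    exact Finset.card_le_five

theorem upper_eight {F : Type*} [Field F] [Finite F] (hn : Nat.card F = 8) :
    ∃ H : Set (Fin 3 → F), ShortCovering H ∧ H.ncard ≤ 6 := by
  classical
  obtain ⟨g, hg, ho⟩ := exists_generator 7 hn
  refine ⟨(({![(g : F) ^ 3, (g : F) ^ 2, 1], ![(g : F) ^ 11, (g : F) ^ 5, 1], ![(g : F) ^ 5, (g : F) ^ 3, 1], ![(g : F) ^ 6, (g : F) ^ 6, 1],
    ![0, (g : F) ^ 4, 1], ![1, 0, 0]} : Finset (Fin 3 → F)) : Set (Fin 3 → F)), ?_, ?_⟩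
  · refine covering_of_exponents 7 (by norm_num) g hg ho _ [3, 11, 5, 6] [2, 5, 3, 6, 4] [1, 6, 2, 0]
      ?_ ?_ ?_ ?_ (by decide)
    · intro i
      fin_cases i
      · exact ⟨![0, (g : F) ^ 4, 1], by simp only [Finset.mem_coe, Finset.mem_insert, Finset.mem_singleton, true_or, or_true], 2, by decide, by simp, by simp⟩
      · exact ⟨![1, 0, 0], by simp only [Finset.mem_coe, Finset.mem_insert, Finset.mem_singleton, true_or, or_true], 0, by decide, by simp, by simp⟩
      · exact ⟨![1, 0, 0], by simp only [Finset.mem_coe, Finset.mem_insert, Finset.mem_singleton, true_or, or_true], 0, by decide, by simp, by simp⟩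
    · simp only [List.forall_mem_cons, List.not_mem_nil, false_imp_iff, implies_true, and_true]
      refine ⟨⟨![(g : F) ^ 3, (g : F) ^ 2, 1], by simp only [Finset.mem_coe, Finset.mem_insert, Finset.mem_singleton, true_or, or_true], by simp, by simp⟩,
        ⟨![(g : F) ^ 11, (g : F) ^ 5, 1], by simp only [Finset.mem_coe, Finset.mem_insert, Finset.mem_singleton, true_or, or_true], by simp, by simp⟩,
        ⟨![(g : F) ^ 5, (g : F) ^ 3, 1], by simp only [Finset.mem_coe, Finset.mem_insert, Finset.mem_singleton, true_or, or_true], by simp, by simp⟩,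
        ⟨![(g : F) ^ 6, (g : F) ^ 6, 1], by simp only [Finset.mem_coe, Finset.mem_insert, Finset.mem_singleton, true_or, or_true], by simp, by simp⟩⟩
    · simp only [List.forall_mem_cons, List.not_mem_nil, false_imp_iff, implies_true, and_true]
      refine ⟨⟨![(g : F) ^ 3, (g : F) ^ 2, 1], by simp only [Finset.mem_coe, Finset.mem_insert, Finset.mem_singleton, true_or, or_true], by simp, by simp⟩,
        ⟨![(g : F) ^ 11, (g : F) ^ 5, 1], by simp only [Finset.mem_coe, Finset.mem_insert, Finset.mem_singleton, true_or, or_true], by simp, by simp⟩,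
        ⟨![(g : F) ^ 5, (g : F) ^ 3, 1], by simp only [Finset.mem_coe, Finset.mem_insert, Finset.mem_singleton, true_or, or_true], by simp, by simp⟩,
        ⟨![(g : F) ^ 6, (g : F) ^ 6, 1], by simp only [Finset.mem_coe, Finset.mem_insert, Finset.mem_singleton, true_or, or_true], by simp, by simp⟩,
        ⟨![0, (g : F) ^ 4, 1], by simp only [Finset.mem_coe, Finset.mem_insert, Finset.mem_singleton, true_or, or_true], by simp, by simp⟩⟩
    · simp only [List.forall_mem_cons, List.not_mem_nil, false_imp_iff, implies_true, and_true]
      refine ⟨⟨![(g : F) ^ 3, (g : F) ^ 2, 1], by simp only [Finset.mem_coe, Finset.mem_insert, Finset.mem_singleton, true_or, or_true], by simp, by simp; ring⟩,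
        ⟨![(g : F) ^ 11, (g : F) ^ 5, 1], by simp only [Finset.mem_coe, Finset.mem_insert, Finset.mem_singleton, true_or, or_true], by simp, by simp [← pow_add]⟩,
        ⟨![(g : F) ^ 5, (g : F) ^ 3, 1], by simp only [Finset.mem_coe, Finset.mem_insert, Finset.mem_singleton, true_or, or_true], by simp, by simp [← pow_add]⟩,
        ⟨![(g : F) ^ 6, (g : F) ^ 6, 1], by simp only [Finset.mem_coe, Finset.mem_insert, Finset.mem_singleton, true_or, or_true], by simp, by simp [← pow_add]⟩⟩
  · rw [Set.ncard_coe_finset]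
    exact Finset.card_le_six

theorem upper_nine {F : Type*} [Field F] [Finite F] (hn : Nat.card F = 9) :
    ∃ H : Set (Fin 3 → F), ShortCovering H ∧ H.ncard ≤ 6 := by
  classical
  obtain ⟨g, hg, ho⟩ := exists_generator 8 hn
  refine ⟨(({![(g : F), 1, 1], ![(g : F) ^ 5, (g : F) ^ 2, 1], ![(g : F) ^ 11, (g : F) ^ 6, 1], ![(g : F) ^ 7, 0, 1],
    ![0, (g : F) ^ 4, 1], ![(g : F) ^ 7, 1, 0]} : Finset (Fin 3 → F)) : Set (Fin 3 → F)), ?_, ?_⟩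
  · refine covering_of_exponents 8 (by norm_num) g hg ho _ [1, 5, 11, 7] [0, 2, 6, 4] [1, 3, 5, 7]
      ?_ ?_ ?_ ?_ (by decide)
    · intro i
      fin_cases i
      · exact ⟨![0, (g : F) ^ 4, 1], by simp, 2, by decide, by simp, by simp⟩
      · exact ⟨![(g : F) ^ 7, 0, 1], by simp, 2, by decide, by simp, by simp⟩
      · exact ⟨![(g : F) ^ 7, 1, 0], by simp, 1, by decide, by simp, by simp⟩
    all_goals simp [← pow_add]
  · rw [Set.ncard_coe_finset]
    exact Finset.card_le_six

theorem isLeast_of {F : Type*} [Field F] [Finite F] (m : ℕ) (hm : m + 2 < Nat.card F)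
    (hm2 : 2 * m < Nat.card F + 3)
    (hu : ∃ H : Set (Fin 3 → F), ShortCovering H ∧ H.ncard ≤ m + 1) :
    IsLeast {n : ℕ | ∃ H : Set (Fin 3 → F), ShortCovering H ∧ H.ncard = n} (m + 1) := by
  constructor
  · obtain ⟨H, hH, hle⟩ := hu
    exact ⟨H, hH, le_antisymm hle (lower_bound m hm hm2 H hH)⟩
  · rintro n ⟨H, hH, rfl⟩
    exact lower_bound m hm hm2 H hH


theorem stmt_3 :
    IsLeast {n : ℕ | ∃ H : Set (Fin 3 → ZMod 7), ShortCovering H ∧ H.ncard = n} 5 ∧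
    IsLeast {n : ℕ | ∃ H : Set (Fin 3 → GaloisField 2 3), ShortCovering H ∧ H.ncard = n} 6 ∧
    IsLeast {n : ℕ | ∃ H : Set (Fin 3 → GaloisField 3 2), ShortCovering H ∧ H.ncard = n} 6 := by
  have c7 : Nat.card (ZMod 7) = 7 := Nat.card_zmod 7
  have c8 : Nat.card (GaloisField 2 3) = 8 := GaloisField.card 2 3 (by norm_num)
  have c9 : Nat.card (GaloisField 3 2) = 9 := GaloisField.card 3 2 (by norm_num)
  exact ⟨isLeast_of 4 (by omega) (by omega) (upper_seven c7),
    isLeast_of 5 (by omega) (by omega) (upper_eight c8),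
    isLeast_of 5 (by omega) (by omega) (upper_nine c9)⟩
end

section
/- Every short covering of 𝔽_7³ has at least 5 elements. -/
open Set Pointwise

variable {F : Type*} [Field F]

/-- A covered vector agrees with a multiple of the center in two coordinates. -/
lemma cov_cases (h v : Fin 3 → ZMod 7) (hv : v ∈ extBall h) :
    ∃ l : ZMod 7, (l * h 0 = v 0 ∧ l * h 1 = v 1) ∨ (l * h 0 = v 0 ∧ l * h 2 = v 2) ∨
      (l * h 1 = v 1 ∧ l * h 2 = v 2) := by
  simp only [extBall, Set.mem_iUnion, ball, Set.mem_setOf_eq, hdist] at hv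
  obtain ⟨l, hl⟩ := hv
  refine ⟨l, ?_⟩
  rw [Set.ncard_le_one (Set.toFinite _)] at hl
  simp only [Set.mem_setOf_eq, Pi.smul_apply, smul_eq_mul] at hl
  have h01 := hl 0
  have h12 := hl 1
  by_contra hc
  push Not at hc
  by_cases e0 : l * h 0 = v 0
  · exact absurd (h12 (hc.1 e0) 2 (hc.2.1 e0)) (by decide)
  · by_cases e1 : l * h 1 = v 1
    · exact absurd (h01 e0 2 (hc.2.2 e1)) (by decide)
    · exact absurd (h01 e0 1 e1) (by decide)

/-- A set of at most six elements misses some element of the field. -/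
lemma exists_avoid (A : Finset (ZMod 7)) (hA : A.card < 7) : ∃ t, t ∉ A := by
  by_contra hc
  push Not at hc
  have : A = Finset.univ := Finset.eq_univ_iff_forall.2 hc
  rw [this, Finset.card_univ, ZMod.card] at hA
  omega

lemma exists_ratio (H : Finset (Fin 3 → ZMod 7)) (hc : H.card ≤ 4)
    (f : (Fin 3 → ZMod 7) → ZMod 7) : ∃ t : ZMod 7, t ≠ 0 ∧ ∀ h ∈ H, f h ≠ t := by
  classical
  obtain ⟨t, ht⟩ := exists_avoid (insert 0 (H.image f)) (by
    have h1 := Finset.card_insert_le 0 (H.image f)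
    have h2 := Finset.card_image_le (s := H) (f := f)
    omega)
  simp only [Finset.mem_insert, Finset.mem_image, not_or, not_exists, not_and] at ht
  exact ⟨t, ht.1, ht.2⟩

lemma ratio_eq {l a b t : ZMod 7} (h1 : l * a = 1) (h2 : l * b = t) : b / a = t := by
  have ha : a ≠ 0 := by rintro rfl; simp at h1
  rw [div_eq_iff ha]
  linear_combination (-b) * h1 + a * h2

theorem no_cover (H : Finset (Fin 3 → ZMod 7)) (hc : H.card ≤ 4)
    (hH : ∀ v, ∃ h ∈ H, v ∈ extBall h) : False := by
  classical
  -- an element of each coordinate plane lies in `H`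
  have ha : ∃ a ∈ H, a 2 = 0 ∧ a ≠ 0 := by
    obtain ⟨t, ht0, ht⟩ := exists_ratio H hc (fun h => h 1 / h 0)
    obtain ⟨h, hh, hv⟩ := hH ![1, t, 0]
    obtain ⟨l, hl⟩ := cov_cases _ _ hv
    simp at hl
    refine ⟨h, hh, ?_, ?_⟩
    · rcases hl with ⟨h1, h2⟩ | ⟨h1, rfl | h2⟩ | ⟨h1, rfl | h2⟩
      · exact absurd (ratio_eq h1 h2) (ht h hh)
      · simp at h1
      · exact h2
      · simp at h1; exact absurd h1.symm ht0
      · exact h2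
    · rintro rfl
      simp [ht0.symm] at hl
  have hb : ∃ a ∈ H, a 1 = 0 ∧ a ≠ 0 := by
    obtain ⟨t, ht0, ht⟩ := exists_ratio H hc (fun h => h 2 / h 0)
    obtain ⟨h, hh, hv⟩ := hH ![1, 0, t]
    obtain ⟨l, hl⟩ := cov_cases _ _ hv
    simp at hl
    refine ⟨h, hh, ?_, ?_⟩
    · rcases hl with ⟨h1, rfl | h2⟩ | ⟨h1, h2⟩ | ⟨rfl | h2, h1⟩
      · simp at h1
      · exact h2
      · exact absurd (ratio_eq h1 h2) (ht h hh)
      · simp at h1; exact absurd h1.symm ht0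
      · exact h2
    · rintro rfl
      simp [ht0.symm] at hl
  have hc0 : ∃ a ∈ H, a 0 = 0 ∧ a ≠ 0 := by
    obtain ⟨t, ht0, ht⟩ := exists_ratio H hc (fun h => h 2 / h 1)
    obtain ⟨h, hh, hv⟩ := hH ![0, 1, t]
    obtain ⟨l, hl⟩ := cov_cases _ _ hv
    simp at hl
    refine ⟨h, hh, ?_, ?_⟩
    · rcases hl with ⟨rfl | h2, h1⟩ | ⟨rfl | h2, h1⟩ | ⟨h1, h2⟩
      · simp at h1
      · exact h2
      · simp at h1; exact absurd h1.symm ht0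
      · exact h2
      · exact absurd (ratio_eq h1 h2) (ht h hh)
    · rintro rfl
      simp [ht0.symm] at hl
  obtain ⟨a, haH, ha2, ha0⟩ := ha
  obtain ⟨b, hbH, hb1, -⟩ := hb
  obtain ⟨c, hcH, hc0, -⟩ := hc0
  obtain ⟨x, hx0, hx⟩ := exists_ratio H hc (fun h => h 1 / h 0)
  set H1 := H.filter (fun h => h 2 ≠ 0 ∧ h 0 ≠ 0) with hH1
  set H2 := H.filter (fun h => h 2 ≠ 0 ∧ h 1 ≠ 0) with hH2
  have s1 : H1 ⊆ (H.erase a).erase c := by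
    intro h hh
    simp only [hH1, Finset.mem_filter] at hh
    simp only [Finset.mem_erase]
    refine ⟨?_, ?_, hh.1⟩
    · rintro rfl; exact hh.2.2 hc0
    · rintro rfl; exact hh.2.1 ha2
  have s2 : H2 ⊆ (H.erase a).erase b := by
    intro h hh
    simp only [hH2, Finset.mem_filter] at hh
    simp only [Finset.mem_erase]
    refine ⟨?_, ?_, hh.1⟩
    · rintro rfl; exact hh.2.2 hb1
    · rintro rfl; exact hh.2.1 ha2
  have ca := Finset.card_erase_of_mem haH
  have c1 := Finset.card_le_card s1
  have c2 := Finset.card_le_card s2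
  have e1 := Finset.card_erase_le (s := H.erase a) (a := c)
  have e2 := Finset.card_erase_le (s := H.erase a) (a := b)
  have tot : H1.card + H2.card ≤ 5 := by
    by_cases hac : c = a
    · have hba : b ≠ a := by
        rintro rfl
        subst hac
        apply ha0
        ext i
        fin_cases i <;> simp [*]
      have := Finset.card_erase_of_mem (Finset.mem_erase.2 ⟨hba, hbH⟩)
      omega
    · have := Finset.card_erase_of_mem (Finset.mem_erase.2 ⟨hac, hcH⟩)
      omega
  obtain ⟨y, hy⟩ := exists_avoid
    (insert 0 (H1.image (fun h => h 2 / h 0) ∪ H2.image (fun h => x * (h 2 / h 1)))) (by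
      have i0 := Finset.card_insert_le 0
        (H1.image (fun h => h 2 / h 0) ∪ H2.image (fun h => x * (h 2 / h 1)))
      have i1 := Finset.card_union_le
        (H1.image (fun h => h 2 / h 0)) (H2.image (fun h => x * (h 2 / h 1)))
      have i2 := Finset.card_image_le (s := H1) (f := fun h => h 2 / h 0)
      have i3 := Finset.card_image_le (s := H2) (f := fun h => x * (h 2 / h 1))
      omega)
  simp only [Finset.mem_insert, Finset.mem_union, Finset.mem_image, not_or, not_exists,
    not_and] at hy
  obtain ⟨hy0, hy1, hy2⟩ := hy
  obtain ⟨h, hh, hv⟩ := hH ![1, x, y]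
  obtain ⟨l, hl⟩ := cov_cases _ _ hv
  simp at hl
  rcases hl with ⟨h1, h2⟩ | ⟨h1, h2⟩ | ⟨h1, h2⟩
  · exact hx h hh (ratio_eq h1 h2)
  · refine hy1 h ?_ (ratio_eq h1 h2)
    simp only [hH1, Finset.mem_filter]
    refine ⟨hh, ?_, ?_⟩ <;> intro e <;> simp [e] at h1 h2
    exact hy0 h2.symm
  · have n1 : h 1 ≠ 0 := by intro e; simp [e] at h1; exact hx0 h1.symm
    have n2 : h 2 ≠ 0 := by intro e; simp [e] at h2; exact hy0 h2.symm
    refine hy2 h ?_ ?_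
    · simp only [hH2, Finset.mem_filter]
      exact ⟨hh, n2, n1⟩
    · rw [← h1, ← h2]
      field_simp

theorem stmt_17 (H : Set (Fin 3 → ZMod 7)) (hH : ShortCovering H) : 5 ≤ H.ncard := by
  classical
  by_contra hlt
  have hfin : H.Finite := Set.toFinite H
  refine no_cover hfin.toFinset ?_ ?_
  · rw [← Set.ncard_eq_toFinset_card H hfin]
    omega
  · intro v
    have hv : v ∈ ⋃ h ∈ H, extBall h := by
      rw [ShortCovering] at hH
      rw [hH]
      trivial
    simpa using hv
end

section
/- Every short covering of 𝔽_8³ has at least 6 elements. -/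
open Set Pointwise

variable {F : Type*} [Field F]

theorem agree_of_ball (u v : Fin 3 → F) (h : v ∈ ball u) :
    (u 0 = v 0 ∧ u 1 = v 1) ∨ (u 0 = v 0 ∧ u 2 = v 2) ∨ (u 1 = v 1 ∧ u 2 = v 2) := by
  have h1 : Set.ncard {i : Fin 3 | u i ≠ v i} ≤ 1 := h
  rw [Set.ncard_le_one_iff] at h1
  have a := @h1 0 1
  have b := @h1 0 2
  have c := @h1 1 2
  simp only [Set.mem_ofPred_eq] at a b c
  have n1 : (0 : Fin 3) ≠ 1 := by decide
  have n2 : (0 : Fin 3) ≠ 2 := by decide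
  have n3 : (1 : Fin 3) ≠ 2 := by decide
  tauto

theorem exists_agree (H : Set (Fin 3 → F)) (hH : ShortCovering H) (v : Fin 3 → F) :
    ∃ h ∈ H, ∃ l : F, (l * h 0 = v 0 ∧ l * h 1 = v 1) ∨ (l * h 0 = v 0 ∧ l * h 2 = v 2) ∨
      (l * h 1 = v 1 ∧ l * h 2 = v 2) := by
  have hv : v ∈ (⋃ h ∈ H, extBall h) := by rw [hH]; trivial
  simp only [Set.mem_iUnion, extBall] at hv
  obtain ⟨h, hh, l, hl⟩ := hv
  exact ⟨h, hh, l, by simpa using agree_of_ball _ _ hl⟩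

open Classical in
/-- Ratios `h j / h i` realised by elements of `H` nonzero at both positions. -/
noncomputable def ratios (H : Finset (Fin 3 → F)) (i j : Fin 3) : Finset F :=
  (H.filter (fun h => h i ≠ 0 ∧ h j ≠ 0)).image (fun h => h j / h i)

theorem mem_ratios (H : Finset (Fin 3 → F)) (i j : Fin 3) (h : Fin 3 → F) (hh : h ∈ H) (l a b : F)
    (ha : a ≠ 0) (hb : b ≠ 0) (e1 : l * h i = a) (e2 : l * h j = b) : b / a ∈ ratios H i j := by
  classical
  subst e1 e2
  have hl := left_ne_zero_of_mul ha
  have h1 := right_ne_zero_of_mul ha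
  have h2 := right_ne_zero_of_mul hb
  unfold ratios
  simp only [Finset.mem_image, Finset.mem_filter]
  exact ⟨h, ⟨hh, h1, h2⟩, by field_simp⟩

open Classical in
theorem card_ratios_le (H : Finset (Fin 3 → F)) (i j : Fin 3) :
    (ratios H i j).card ≤ ∑ h ∈ H, (if h i ≠ 0 ∧ h j ≠ 0 then 1 else 0) := by
  rw [← Finset.card_filter]
  exact Finset.card_image_le

theorem exists_notMem [Fintype F] (hF : Fintype.card F = 8) (A : Finset F) (hA : A.card ≤ 5) :
    ∃ x : F, x ≠ 0 ∧ x ∉ A := by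
  classical
  by_contra! hc
  have : (Finset.univ : Finset F) ⊆ insert 0 A := by
    intro x _
    by_cases hx : x = 0
    · simp [hx]
    · simp [hc x hx]
  have h1 := Finset.card_le_card this
  have h2 := Finset.card_insert_le (0 : F) A
  rw [Finset.card_univ, hF] at h1
  omega

theorem seven_le [Fintype F] (hF : Fintype.card F = 8) (A C : Finset F) (g : F → F)
    (h : ∀ x : F, x ≠ 0 → x ∈ A ∨ ∃ c ∈ C, g c = x) : 7 ≤ A.card + C.card := by
  classical
  have : (Finset.univ : Finset F) ⊆ insert 0 (A ∪ C.image g) := by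
    intro x _
    by_cases hx : x = 0
    · simp [hx]
    · have := h x hx
      simp only [Finset.mem_insert, Finset.mem_union, Finset.mem_image]
      exact Or.inr this
  have h1 := Finset.card_le_card this
  have h2 := Finset.card_insert_le (0 : F) (A ∪ C.image g)
  have h3 := Finset.card_union_le A (C.image g)
  have h4 : (C.image g).card ≤ C.card := Finset.card_image_le
  rw [Finset.card_univ, hF] at h1
  omega

theorem six_le_card [Fintype F] (hF : Fintype.card F = 8) (H : Finset (Fin 3 → F))
    (hH : ShortCovering (H : Set (Fin 3 → F))) : 6 ≤ H.card := by
  classical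
  by_contra hlt
  have hle : H.card ≤ 5 := by omega
  have cov := exists_agree _ hH
  have r5 : ∀ i j, (ratios H i j).card ≤ 5 := fun i j =>
    (Finset.card_image_le.trans (Finset.card_filter_le _ _)).trans hle
  have tor : ∀ x y : F, x ≠ 0 → y ≠ 0 →
      x ∈ ratios H 0 1 ∨ y ∈ ratios H 0 2 ∨ y / x ∈ ratios H 1 2 := by
    intro x y hx hy
    obtain ⟨h, hh, l, e⟩ := cov ![1, x, y]
    have hh' : h ∈ H := by simpa using hh
    simp at e
    rcases e with ⟨e1, e2⟩ | ⟨e1, e2⟩ | ⟨e1, e2⟩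
    · left; simpa using mem_ratios H 0 1 h hh' l 1 x one_ne_zero hx e1 e2
    · right; left; simpa using mem_ratios H 0 2 h hh' l 1 y one_ne_zero hy e1 e2
    · right; right; exact mem_ratios H 1 2 h hh' l x y hx hy e1 e2
  have s1 : 7 ≤ (ratios H 0 1).card + (ratios H 1 2).card := by
    obtain ⟨y, hy, hy'⟩ := exists_notMem hF _ (r5 0 2)
    refine seven_le hF _ _ (fun c => y / c) fun x hx => ?_
    rcases tor x y hx hy with h | h | h
    · exact Or.inl h
    · exact absurd h hy'
    · exact Or.inr ⟨_, h, by field_simp⟩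
  have s2 : 7 ≤ (ratios H 0 2).card + (ratios H 1 2).card := by
    obtain ⟨x, hx, hx'⟩ := exists_notMem hF _ (r5 0 1)
    refine seven_le hF _ _ (fun c => x * c) fun y hy => ?_
    rcases tor x y hx hy with h | h | h
    · exact absurd h hx'
    · exact Or.inl h
    · exact Or.inr ⟨_, h, by field_simp⟩
  have s3 : 7 ≤ (ratios H 0 1).card + (ratios H 0 2).card := by
    obtain ⟨z, hz, hz'⟩ := exists_notMem hF _ (r5 1 2)
    refine seven_le hF _ _ (fun c => c / z) fun x hx => ?_
    rcases tor x (x * z) hx (mul_ne_zero hx hz) with h | h | h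
    · exact Or.inl h
    · exact Or.inr ⟨_, h, by field_simp⟩
    · exact absurd (by simpa [hx] using h) hz'
  have z0 : ∃ a ∈ H, a 0 = 0 ∧ (a 1 ≠ 0 ∨ a 2 ≠ 0) := by
    obtain ⟨z, hz, hz'⟩ := exists_notMem hF _ (r5 1 2)
    obtain ⟨h, hh, l, e⟩ := cov ![0, 1, z]
    have hh' : h ∈ H := by simpa using hh
    simp at e
    by_cases e' : l * h 1 = 1 ∧ l * h 2 = z
    · exact absurd (by simpa using mem_ratios H 1 2 h hh' l 1 z one_ne_zero hz e'.1 e'.2) hz'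
    · refine ⟨h, hh', ?_⟩
      grind
  have z1 : ∃ a ∈ H, a 1 = 0 ∧ (a 0 ≠ 0 ∨ a 2 ≠ 0) := by
    obtain ⟨z, hz, hz'⟩ := exists_notMem hF _ (r5 0 2)
    obtain ⟨h, hh, l, e⟩ := cov ![1, 0, z]
    have hh' : h ∈ H := by simpa using hh
    simp at e
    by_cases e' : l * h 0 = 1 ∧ l * h 2 = z
    · exact absurd (by simpa using mem_ratios H 0 2 h hh' l 1 z one_ne_zero hz e'.1 e'.2) hz'
    · refine ⟨h, hh', ?_⟩
      grind
  have z2 : ∃ a ∈ H, a 2 = 0 ∧ (a 0 ≠ 0 ∨ a 1 ≠ 0) := by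
    obtain ⟨z, hz, hz'⟩ := exists_notMem hF _ (r5 0 1)
    obtain ⟨h, hh, l, e⟩ := cov ![1, z, 0]
    have hh' : h ∈ H := by simpa using hh
    simp at e
    by_cases e' : l * h 0 = 1 ∧ l * h 1 = z
    · exact absurd (by simpa using mem_ratios H 0 1 h hh' l 1 z one_ne_zero hz e'.1 e'.2) hz'
    · refine ⟨h, hh', ?_⟩
      grind
  let p : Fin 3 → Fin 3 → (Fin 3 → F) → ℕ := fun i j h => if h i ≠ 0 ∧ h j ≠ 0 then 1 else 0
  let q : Fin 3 → Fin 3 → (Fin 3 → F) → ℕ := fun i j h => if h i ≠ 0 ∧ h j ≠ 0 then 0 else 1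
  let g : (Fin 3 → F) → ℕ := fun h => q 0 1 h + q 0 2 h + q 1 2 h
  have c1 : (ratios H 0 1).card ≤ ∑ h ∈ H, p 0 1 h := card_ratios_le H 0 1
  have c2 : (ratios H 0 2).card ≤ ∑ h ∈ H, p 0 2 h := card_ratios_le H 0 2
  have c3 : (ratios H 1 2).card ≤ ∑ h ∈ H, p 1 2 h := card_ratios_le H 1 2
  have tot : ∑ h ∈ H, (p 0 1 h + p 0 2 h + p 1 2 h + g h) = 3 * H.card := by
    rw [Finset.sum_congr rfl (g := fun _ => 3), Finset.sum_const, smul_eq_mul, mul_comm]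
    intro h _
    simp only [p, q, g]
    split_ifs <;> rfl
  simp only [Finset.sum_add_distrib] at tot
  have sub : ∀ S : Finset (Fin 3 → F), S ⊆ H → ∑ h ∈ S, g h ≤ ∑ h ∈ H, g h := fun S hS =>
    Finset.sum_le_sum_of_subset hS
  have gt : ∀ a b, a ∈ H → b ∈ H → a ≠ b → g a + g b ≤ ∑ h ∈ H, g h := by
    intro a b ha hb hab
    rw [← Finset.sum_pair hab]
    exact sub _ (by intro x hx; simp at hx; rcases hx with rfl | rfl <;> assumption)
  have gt3 : ∀ a b c, a ∈ H → b ∈ H → c ∈ H → a ≠ b → a ≠ c → b ≠ c →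
      g a + g b + g c ≤ ∑ h ∈ H, g h := by
    intro a b c ha hb hc hab hac hbc
    have := sub {a, b, c} (by
      intro x hx; simp at hx; rcases hx with rfl | rfl | rfl <;> assumption)
    rwa [Finset.sum_insert (by simp [hab, hac]), Finset.sum_pair hbc, ← add_assoc] at this
  have gsum : 5 ≤ ∑ h ∈ H, g h := by
    obtain ⟨a, ha, a0, a'⟩ := z0
    obtain ⟨b, hb, b1, b'⟩ := z1
    obtain ⟨c, hc, c2, c'⟩ := z2
    have ga : 2 ≤ g a := by simp [g, q, a0]
    have gb : 2 ≤ g b := by simp [g, q, b1]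
    have gc : 2 ≤ g c := by simp [g, q, c2]
    by_cases hab : a = b
    · subst hab
      have : a ≠ c := by rintro rfl; simp_all
      have g3 : g a = 3 := by simp [g, q, a0, b1]
      have := gt a c ha hc this
      omega
    by_cases hac : a = c
    · subst hac
      have g3 : g a = 3 := by simp [g, q, a0, c2]
      have := gt a b ha hb hab
      omega
    by_cases hbc : b = c
    · subst hbc
      have g3 : g b = 3 := by simp [g, q, b1, c2]
      have := gt a b ha hb hab
      omega
    have := gt3 a b c ha hb hc hab hac hbc
    omega
  have tot' : ∑ h ∈ H, p 0 1 h + ∑ h ∈ H, p 0 2 h + ∑ h ∈ H, p 1 2 h + ∑ h ∈ H, g h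
      = 3 * H.card := by
    rw [← tot]
  omega

theorem stmt_18 (H : Set (Fin 3 → GaloisField 2 3)) (hH : ShortCovering H) : 6 ≤ H.ncard := by
  classical
  have hc : Nat.card (GaloisField 2 3) = 8 := by
    rw [GaloisField.card 2 3 (by norm_num)]; norm_num
  have : Finite (GaloisField 2 3) := Nat.finite_of_card_ne_zero (by omega)
  have := Fintype.ofFinite (GaloisField 2 3)
  have hF : Fintype.card (GaloisField 2 3) = 8 := by rw [← Nat.card_eq_fintype_card, hc]
  have hfin : H.Finite := Set.toFinite H
  rw [Set.ncard_eq_toFinset_card H hfin]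
  exact six_le_card hF _ (by simpa using hH)
end
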